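/- Let ξ_d < 0 be the unique negative eigenvalue of 𝓛 with L²-normalized eigenfunction φ_d, and let φ(·,η) be the generalized eigenfunction of 𝓛 with eigenvalue η > 0 normalized by φ(0,η)=0, ∂_Rφ(0,η)=1. Then the function K_d(η) := ∫₀^∞ R φ_d'(R) φ(R,η) dR is well defined (the integral converges), smooth on (0,∞), and rapidly decaying at infinity: for every N there is C_N with |K_d(η)| ≤ C_N η^{−N} for η ≥ 1. -/

import Mathlib

open MeasureTheory

noncomputable section

namespace DiscreteKernel

def qf (R : ℝ) : ℝ := 5 / (1 + R ^ 2 / 3) ^ 2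

lemma qf_pos (R : ℝ) : 0 < qf R := by unfold qf; positivity

lemma qf_le (R : ℝ) : qf R ≤ 15 * (1 / (1 + R ^ 2)) := by
  unfold qf
  rw [mul_one_div, div_le_div_iff₀ (by positivity) (by positivity)]
  nlinarith [sq_nonneg R, sq_nonneg (R^2)]

lemma qf_cont : Continuous qf := by
  unfold qf
  exact continuous_const.div (by fun_prop) (fun x => by positivity)

/-- Exponential decay of the eigenfunction. -/
lemma phid_decay (ξd : ℝ) (φd : ℝ → ℝ) (hξd : ξd < 0)
    (hφd_pos : ∀ R : ℝ, 0 < R → 0 < φd R)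
    (hφd_d : ∀ R : ℝ, HasDerivAt φd (deriv φd R) R)
    (hφd_dd : ∀ R : ℝ, HasDerivAt (deriv φd) (deriv (deriv φd) R) R)
    (hφd_eq : ∀ R : ℝ, 0 < R → deriv (deriv φd) R = (- ξd - qf R) * φd R)
    (hφd_L2 : IntegrableOn (fun R => (φd R) ^ 2) (Set.Ioi 0)) :
    ∃ a > 0, ∃ C > 0, ∀ R : ℝ, 0 ≤ R →
      |φd R| ≤ C * Real.exp (-(a * R)) ∧ |deriv φd R| ≤ C * Real.exp (-(a * R)) := by
  have hcont : Continuous φd := continuous_iff_continuousAt.2 fun R => (hφd_d R).continuousAt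
  have hcont' : Continuous (deriv φd) :=
    continuous_iff_continuousAt.2 fun R => (hφd_dd R).continuousAt
  set a := Real.sqrt (-ξd / 2) with ha
  have hapos : 0 < a := Real.sqrt_pos.2 (by linarith)
  have ha2 : a ^ 2 = -ξd / 2 := Real.sq_sqrt (by linarith)
  set R0 : ℝ := 1 + 30 / (-ξd) with hR0
  have hR0' : 1 ≤ R0 := by
    have : 0 ≤ 30 / (-ξd) := div_nonneg (by norm_num) (by linarith)
    linarith
  have hq : ∀ R, R0 ≤ R → qf R ≤ a ^ 2 := by
    intro R hR
    refine (qf_le R).trans ?_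
    rw [ha2, mul_one_div, div_le_div_iff₀ (by positivity) (by norm_num)]
    have h1 : 30 / (-ξd) ≤ R := by linarith
    rw [div_le_iff₀ (by linarith)] at h1
    nlinarith
  have hdd : ∀ R, R0 ≤ R → a ^ 2 * φd R ≤ deriv (deriv φd) R := by
    intro R hR
    have hp := hφd_pos R (by linarith)
    rw [hφd_eq R (by linarith)]
    have := hq R hR
    apply mul_le_mul_of_nonneg_right _ hp.le
    linarith
  have notL2 : ∀ R1 c : ℝ, R0 ≤ R1 → 0 < c → (∀ R, R1 ≤ R → c ≤ φd R) → False := by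
    intro R1 c hR1 hc h
    have h1 : IntegrableOn (fun _ : ℝ => c ^ 2) (Set.Ioi R1) := by
      refine Integrable.mono' (hφd_L2.mono_set (Set.Ioi_subset_Ioi (by linarith)))
        (by fun_prop) ?_
      refine (ae_restrict_iff' measurableSet_Ioi).2 (Filter.Eventually.of_forall fun R hR => ?_)
      have := h R (le_of_lt hR)
      rw [Real.norm_of_nonneg (by positivity)]
      exact pow_le_pow_left₀ hc.le this 2
    rw [integrableOn_const_iff] at h1
    simp [hc.ne'] at h1
  have mono' : MonotoneOn (deriv φd) (Set.Ici R0) := by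
    apply monotoneOn_of_deriv_nonneg (convex_Ici _) hcont'.continuousOn
      (fun x _ => (hφd_dd x).differentiableAt.differentiableWithinAt)
    intro x hx
    rw [interior_Ici] at hx
    have hx' : R0 < x := hx
    have := hdd x hx'.le
    have := hφd_pos x (by linarith)
    exact le_trans (by positivity) (hdd x hx'.le)
  have nonpos : ∀ R, R0 ≤ R → deriv φd R ≤ 0 := by
    intro R1 hR1
    by_contra! hneg
    refine notL2 R1 (φd R1) hR1 (hφd_pos _ (by linarith)) ?_
    have hm : MonotoneOn φd (Set.Ici R1) := by
      apply monotoneOn_of_deriv_nonneg (convex_Ici _) hcont.continuousOn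
        (fun x _ => (hφd_d x).differentiableAt.differentiableWithinAt)
      intro x hx
      rw [interior_Ici] at hx
      have hx' : R1 < x := hx
      exact hneg.le.trans (mono' hR1 (hR1.trans hx'.le) hx'.le)
    intro R hR
    exact hm (Set.self_mem_Ici) hR hR
  have hHd : ∀ R, HasDerivAt (fun R => Real.exp (-(a * R)) * (deriv φd R + a * φd R))
      (Real.exp (-(a * R)) * (-a) * (deriv φd R + a * φd R)
        + Real.exp (-(a * R)) * (deriv (deriv φd) R + a * deriv φd R)) R := by
    intro R
    have h1 : HasDerivAt (fun R => -(a * R)) (-a) R := by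
      simpa using! ((hasDerivAt_id R).const_mul a).neg
    exact h1.exp.mul ((hφd_dd R).add ((hφd_d R).const_mul a))
  have hHm : MonotoneOn (fun R => Real.exp (-(a * R)) * (deriv φd R + a * φd R)) (Set.Ici R0) := by
    apply monotoneOn_of_deriv_nonneg (convex_Ici _)
      (by fun_prop)
      (fun x _ => (hHd x).differentiableAt.differentiableWithinAt)
    intro x hx
    rw [interior_Ici] at hx
    have hx' : R0 < x := hx
    rw [(hHd x).deriv]
    have h1 := hdd x hx'.le
    have h2 := Real.exp_pos (-(a * x))
    have : 0 ≤ Real.exp (-(a * x)) * (deriv (deriv φd) x - a ^ 2 * φd x) :=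
      mul_nonneg h2.le (by linarith)
    linarith
  have hH : ∀ R, R0 ≤ R → deriv φd R + a * φd R ≤ 0 := by
    intro R1 hR1
    by_contra! hneg
    set c := Real.exp (-(a * R1)) * (deriv φd R1 + a * φd R1) with hc
    have hcpos : 0 < c := by positivity
    refine notL2 R1 (c / a) hR1 (by positivity) ?_
    intro R hR
    have h1 : c ≤ Real.exp (-(a * R)) * (deriv φd R + a * φd R) := hHm hR1 (hR1.trans hR) hR
    have h2 := nonpos R (hR1.trans hR)
    have h3 := hφd_pos R (by linarith)
    have h4 : Real.exp (-(a * R)) ≤ 1 := Real.exp_le_one_iff.2 (by nlinarith)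
    have h5 := Real.exp_pos (-(a * R))
    rw [div_le_iff₀ hapos]
    have h6 : Real.exp (-(a * R)) * (deriv φd R + a * φd R) ≤ Real.exp (-(a * R)) * (a * φd R) :=
      mul_le_mul_of_nonneg_left (by linarith) h5.le
    have h7 : Real.exp (-(a * R)) * (a * φd R) ≤ 1 * (a * φd R) :=
      mul_le_mul_of_nonneg_right h4 (by positivity)
    linarith
  have hJd : ∀ R, HasDerivAt (fun R => Real.exp (a * R) * φd R)
      (Real.exp (a * R) * a * φd R + Real.exp (a * R) * deriv φd R) R := by
    intro R
    have h1 : HasDerivAt (fun R => (a * R)) a R := by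
      simpa using ((hasDerivAt_id R).const_mul a)
    exact h1.exp.mul (hφd_d R)
  have hJm : AntitoneOn (fun R => Real.exp (a * R) * φd R) (Set.Ici R0) := by
    apply antitoneOn_of_deriv_nonpos (convex_Ici _)
      (by fun_prop)
      (fun x _ => (hJd x).differentiableAt.differentiableWithinAt)
    intro x hx
    rw [interior_Ici] at hx
    have hx' : R0 < x := hx
    rw [(hJd x).deriv]
    have h1 := hH x hx'.le
    have h2 := Real.exp_pos ((a * x))
    have : Real.exp (a * x) * (deriv φd x + a * φd x) ≤ 0 :=
      mul_nonpos_of_nonneg_of_nonpos h2.le h1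
    linarith
  set J := Real.exp (a * R0) * φd R0 with hJ
  have hJpos : 0 < J := mul_pos (Real.exp_pos _) (hφd_pos _ (by linarith))
  have hb1 : ∀ R, R0 ≤ R → φd R ≤ J * Real.exp (-(a * R)) := by
    intro R hR
    have h1 : Real.exp (a * R) * φd R ≤ J := hJm Set.self_mem_Ici hR hR
    rw [Real.exp_neg, ← div_eq_mul_inv, le_div_iff₀ (Real.exp_pos _)]
    linarith
  have hb2 : ∀ R, R0 + 1 ≤ R → -deriv φd R ≤ J * Real.exp a * Real.exp (-(a * R)) := by
    intro R hR
    obtain ⟨c, hc, hc'⟩ := exists_deriv_eq_slope φd (show R - 1 < R by linarith)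
      hcont.continuousOn (fun x _ => (hφd_d x).differentiableAt.differentiableWithinAt)
    have h1 := mono' (show R0 ≤ c by linarith [hc.1]) (show R0 ≤ R by linarith) hc.2.le
    have h2 := hb1 (R - 1) (by linarith)
    have h3 := hφd_pos R (by linarith)
    have h4 : Real.exp (-(a * (R - 1))) = Real.exp a * Real.exp (-(a * R)) := by
      rw [← Real.exp_add]; congr 1; ring
    rw [h4] at h2
    rw [show R - (R - 1) = 1 by ring, div_one] at hc'
    linarith
  obtain ⟨M1, hM1⟩ := (isCompact_Icc (a := (0:ℝ)) (b := R0 + 1)).exists_bound_of_continuousOn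
    hcont.continuousOn
  obtain ⟨M2, hM2⟩ := (isCompact_Icc (a := (0:ℝ)) (b := R0 + 1)).exists_bound_of_continuousOn
    hcont'.continuousOn
  have hM1n : 0 ≤ M1 := (norm_nonneg _).trans (hM1 0 ⟨le_rfl, by linarith⟩)
  have hM2n : 0 ≤ M2 := (norm_nonneg _).trans (hM2 0 ⟨le_rfl, by linarith⟩)
  refine ⟨a, hapos, (M1 + M2) * Real.exp (a * (R0 + 1)) + J * Real.exp a + J, by positivity, ?_⟩
  intro R hR
  have he := Real.exp_pos (-(a * R))
  have hea := Real.exp_pos a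
  have heb := Real.exp_pos (a * (R0 + 1))
  rcases le_total R (R0 + 1) with h | h
  · have h1 := hM1 R ⟨hR, h⟩
    have h2 := hM2 R ⟨hR, h⟩
    rw [Real.norm_eq_abs] at h1 h2
    have h3 : 1 ≤ Real.exp (a * (R0 + 1)) * Real.exp (-(a * R)) := by
      rw [← Real.exp_add]; apply Real.one_le_exp; nlinarith
    have h4 : M1 + M2 ≤ (M1 + M2) * (Real.exp (a * (R0 + 1)) * Real.exp (-(a * R))) :=
      le_mul_of_one_le_right (by positivity) h3
    have h5 : 0 ≤ (J * Real.exp a + J) * Real.exp (-(a * R)) := by positivity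
    constructor <;> linarith
  · have h1 := hb1 R (by linarith)
    have h2 := hb2 R h
    have h5 : 0 ≤ (M1 + M2) * Real.exp (a * (R0 + 1)) * Real.exp (-(a * R)) := by positivity
    have h6 : 0 ≤ J * Real.exp (-(a * R)) := by positivity
    have h7 : 0 ≤ J * Real.exp a * Real.exp (-(a * R)) := by positivity
    rw [abs_of_pos (hφd_pos R (by linarith)), abs_of_nonpos (nonpos R (by linarith))]
    constructor <;> linarith

/-- Energy bound for generalized eigenfunctions. -/
lemma phi_bound (f : ℝ → ℝ) (η : ℝ) (hη : 0 < η) (h0 : f 0 = 0) (h0' : deriv f 0 = 1)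
    (hd : ∀ R : ℝ, HasDerivAt f (deriv f R) R)
    (hdd : ∀ R : ℝ, HasDerivAt (deriv f) (-(qf R + η) * f R) R) :
    ∀ R, 0 ≤ R → (deriv f R) ^ 2 + η * (f R) ^ 2 ≤
      Real.exp (15 / Real.sqrt η * (Real.pi / 2)) := by
  set k := Real.sqrt η
  have hk : 0 < k := Real.sqrt_pos.2 hη
  have hk2 : k ^ 2 = η := Real.sq_sqrt hη.le
  set E : ℝ → ℝ := fun R => Real.exp (-(15 / k * Real.arctan R)) *
    ((deriv f R) ^ 2 + η * (f R) ^ 2) with hE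
  have hEd : ∀ R, HasDerivAt E (Real.exp (-(15 / k * Real.arctan R)) *
      (-(15 / k * (1 / (1 + R ^ 2)))) * ((deriv f R) ^ 2 + η * (f R) ^ 2) +
      Real.exp (-(15 / k * Real.arctan R)) * (2 * deriv f R * (-(qf R + η) * f R) +
        η * (2 * f R * deriv f R))) R := by
    intro R
    have h1 : HasDerivAt (fun R => -(15 / k * Real.arctan R)) (-(15 / k * (1 / (1 + R ^ 2)))) R :=
      ((Real.hasDerivAt_arctan R).const_mul _).neg
    have h2 := (hdd R).pow 2
    have h3 := ((hd R).pow 2).const_mul η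
    refine (h1.exp.mul (h2.add h3)).congr_deriv ?_
    simp
  have hanti : Antitone E := by
    apply antitone_of_deriv_nonpos (fun x => (hEd x).differentiableAt)
    intro R
    rw [(hEd R).deriv]
    have e := Real.exp_pos (-(15 / k * Real.arctan R))
    have h1 := qf_le R
    have h0 := qf_pos R
    have h2 : -(2 * qf R * f R * deriv f R) ≤
        15 / k * (1 / (1 + R ^ 2)) * ((deriv f R) ^ 2 + η * (f R) ^ 2) := by
      have h3 : -(2 * k * f R * deriv f R) ≤ (deriv f R) ^ 2 + η * (f R) ^ 2 := by
        rw [← hk2]; nlinarith [sq_nonneg (deriv f R + k * f R)]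
      have h4 : -(2 * qf R * f R * deriv f R) = qf R / k * (-(2 * k * f R * deriv f R)) := by
        field_simp
      rw [h4]
      calc _ ≤ qf R / k * ((deriv f R) ^ 2 + η * (f R) ^ 2) :=
            mul_le_mul_of_nonneg_left h3 (by positivity)
        _ ≤ _ := by
            apply mul_le_mul_of_nonneg_right _ (by positivity)
            rw [div_mul_eq_mul_div]
            exact div_le_div_of_nonneg_right h1 hk.le
    have := mul_le_mul_of_nonneg_left h2 e.le
    linarith
  intro R hR
  have h1 : E R ≤ E 0 := hanti hR
  simp only [hE, h0, h0'] at h1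
  simp only [Real.arctan_zero, mul_zero, neg_zero, Real.exp_zero] at h1
  rw [Real.exp_neg, inv_mul_le_iff₀ (Real.exp_pos _)] at h1
  have h2 : Real.exp (15 / k * Real.arctan R) ≤ Real.exp (15 / k * (Real.pi / 2)) :=
    Real.exp_le_exp.2 (mul_le_mul_of_nonneg_left (Real.arctan_lt_pi_div_two R).le (by positivity))
  linarith

/-- Coefficient class: functions generated by constants, `R` and `(1+R²/3)⁻¹`, with parity
(`true` = odd). -/
inductive Cf : Bool → (ℝ → ℝ) → Prop
  | const (c : ℝ) : Cf false (fun _ => c)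
  | ident : Cf true (fun R => R)
  | tt : Cf false (fun R => (1 + R ^ 2 / 3)⁻¹)
  | add {b : Bool} {f g : ℝ → ℝ} : Cf b f → Cf b g → Cf b (fun R => f R + g R)
  | mul {b c : Bool} {f g : ℝ → ℝ} : Cf b f → Cf c g → Cf (b ^^ c) (fun R => f R * g R)

lemma Cf.mul' {b c d : Bool} {f g : ℝ → ℝ} (hf : Cf b f) (hg : Cf c g) (h : d = (b ^^ c)) :
    Cf d (fun R => f R * g R) := by
  subst h; exact hf.mul hg

lemma Cf.hasDeriv {b : Bool} {f : ℝ → ℝ} (hf : Cf b f) :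
    ∃ g, Cf (!b) g ∧ ∀ R, HasDerivAt f (g R) R := by
  induction hf with
  | const c =>
    refine ⟨fun R => 0 * R, (Cf.const 0).mul' Cf.ident (by rfl), fun R => ?_⟩
    simpa using hasDerivAt_const R c
  | ident => exact ⟨fun _ => 1, Cf.const 1, fun R => hasDerivAt_id R⟩
  | tt =>
    refine ⟨fun R => (-(2 / 3) * R) * ((1 + R ^ 2 / 3)⁻¹ * (1 + R ^ 2 / 3)⁻¹),
      ((Cf.const (-(2/3))).mul' Cf.ident (d := true) rfl).mul' (Cf.tt.mul' Cf.tt (d := false) rfl) rfl,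
      fun R => ?_⟩
    have h1 : HasDerivAt (fun R : ℝ => 1 + R ^ 2 / 3) (2 * R / 3) R := by
      simpa using! (((hasDerivAt_id R).pow 2).div_const 3).const_add 1
    refine (h1.inv (by positivity)).congr_deriv ?_
    field_simp
  | add _ _ h1 h2 =>
    obtain ⟨g1, c1, d1⟩ := h1
    obtain ⟨g2, c2, d2⟩ := h2
    exact ⟨_, c1.add c2, fun R => (d1 R).add (d2 R)⟩
  | mul f1 f2 h1 h2 =>
    obtain ⟨g1, c1, d1⟩ := h1
    obtain ⟨g2, c2, d2⟩ := h2
    exact ⟨_, (c1.mul' f2 (by simp)).add (f1.mul' c2 (by simp)), fun R => (d1 R).mul (d2 R)⟩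

lemma Cf.continuous {b : Bool} {f : ℝ → ℝ} (hf : Cf b f) : Continuous f := by
  obtain ⟨g, -, h⟩ := hf.hasDeriv
  exact continuous_iff_continuousAt.2 fun R => (h R).continuousAt

lemma Cf.parity {b : Bool} {f : ℝ → ℝ} (hf : Cf b f) :
    ∀ R, f (-R) = (if b then -1 else 1) * f R := by
  induction hf with
  | const c => simp
  | ident => simp
  | tt => simp
  | add _ _ h1 h2 => intro R; beta_reduce; rw [h1, h2]; ring
  | @mul b c f g _ _ h1 h2 => intro R; beta_reduce; rw [h1, h2]; cases b <;> cases c <;> simp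

lemma Cf.zero {f : ℝ → ℝ} (hf : Cf true f) : f 0 = 0 := by
  have := hf.parity 0
  simp at this
  linarith

lemma Cf.bound {b : Bool} {f : ℝ → ℝ} (hf : Cf b f) :
    ∀ δ > 0, ∃ C > 0, ∀ R, 0 ≤ R → |f R| ≤ C * Real.exp (δ * R) := by
  induction hf with
  | const c =>
    intro δ hδ
    refine ⟨|c| + 1, by positivity, fun R hR => ?_⟩
    have : 1 ≤ Real.exp (δ * R) := Real.one_le_exp (by positivity)
    nlinarith [abs_nonneg c]
  | ident =>
    intro δ hδ
    refine ⟨1 / δ, by positivity, fun R hR => ?_⟩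
    have := Real.add_one_le_exp (δ * R)
    rw [abs_of_nonneg hR, one_div_mul_eq_div, le_div_iff₀ hδ]
    linarith
  | tt =>
    intro δ hδ
    refine ⟨1, by positivity, fun R hR => ?_⟩
    have : 1 ≤ Real.exp (δ * R) := Real.one_le_exp (by positivity)
    rw [abs_of_nonneg (by positivity), one_mul]
    refine le_trans (inv_le_one_of_one_le₀ ?_) this
    have := sq_nonneg R
    linarith
  | add _ _ h1 h2 =>
    intro δ hδ
    obtain ⟨C1, p1, b1⟩ := h1 δ hδ
    obtain ⟨C2, p2, b2⟩ := h2 δ hδ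
    refine ⟨C1 + C2, by positivity, fun R hR => (abs_add_le _ _).trans ?_⟩
    linarith [b1 R hR, b2 R hR]
  | mul _ _ h1 h2 =>
    intro δ hδ
    obtain ⟨C1, p1, b1⟩ := h1 (δ / 2) (by positivity)
    obtain ⟨C2, p2, b2⟩ := h2 (δ / 2) (by positivity)
    refine ⟨C1 * C2, by positivity, fun R hR => ?_⟩
    rw [abs_mul]
    refine (mul_le_mul (b1 R hR) (b2 R hR) (abs_nonneg _) (by positivity)).trans (le_of_eq ?_)
    rw [show δ * R = δ / 2 * R + δ / 2 * R by ring, Real.exp_add]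
    ring

lemma Cf.qf : Cf false qf := by
  have : DiscreteKernel.qf = fun R => 5 * ((1 + R ^ 2 / 3)⁻¹ * (1 + R ^ 2 / 3)⁻¹) := by
    funext R
    unfold DiscreteKernel.qf
    field_simp
  rw [this]
  exact (Cf.const 5).mul' (Cf.tt.mul' Cf.tt (d := false) rfl) rfl

/-- Functions `P φd + S φd'` are closed under differentiation on `(0,∞)`. -/
lemma pair_deriv (ξd : ℝ) (φd : ℝ → ℝ)
    (hφd_d : ∀ R : ℝ, HasDerivAt φd (deriv φd R) R)
    (hφd_dd : ∀ R : ℝ, HasDerivAt (deriv φd) (deriv (deriv φd) R) R)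
    (hφd_eq : ∀ R : ℝ, 0 < R → deriv (deriv φd) R = (- ξd - qf R) * φd R)
    {b : Bool} {P S : ℝ → ℝ} (hP : Cf b P) (hS : Cf (!b) S) :
    ∃ P1 S1, Cf (!b) P1 ∧ Cf b S1 ∧ ∀ R, 0 < R →
      HasDerivAt (fun R => P R * φd R + S R * deriv φd R) (P1 R * φd R + S1 R * deriv φd R) R := by
  obtain ⟨P', cP, dP⟩ := hP.hasDeriv
  obtain ⟨S', cS, dS⟩ := hS.hasDeriv
  rw [Bool.not_not] at cS
  refine ⟨fun R => P' R + S R * (-ξd + (-1) * qf R), fun R => P R + S' R,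
    cP.add (hS.mul' ((Cf.const (-ξd)).add ((Cf.const (-1)).mul' Cf.qf (d := false) rfl)) (by simp)),
    hP.add cS, fun R hR => ?_⟩
  refine (((dP R).mul (hφd_d R)).add ((dS R).mul (hφd_dd R))).congr_deriv ?_
  rw [hφd_eq R hR]; ring

lemma pair_bound (φd : ℝ → ℝ) (a C : ℝ) (ha : 0 < a) (hC : 0 < C)
    (hdec : ∀ R : ℝ, 0 ≤ R →
      |φd R| ≤ C * Real.exp (-(a * R)) ∧ |deriv φd R| ≤ C * Real.exp (-(a * R)))
    {b c : Bool} {P S : ℝ → ℝ} (hP : Cf b P) (hS : Cf c S) :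
    ∃ D > 0, ∀ R, 0 ≤ R → |P R * φd R + S R * deriv φd R| ≤ D * Real.exp (-(a / 2) * R) := by
  obtain ⟨C1, p1, b1⟩ := hP.bound (a / 2) (by positivity)
  obtain ⟨C2, p2, b2⟩ := hS.bound (a / 2) (by positivity)
  refine ⟨(C1 + C2) * C, by positivity, fun R hR => ?_⟩
  have he : Real.exp (-(a / 2) * R) = Real.exp (a / 2 * R) * Real.exp (-(a * R)) := by
    rw [← Real.exp_add]; congr 1; ring
  refine (abs_add_le _ _).trans ?_
  rw [abs_mul, abs_mul, he]
  have h1 := mul_le_mul (b1 R hR) (hdec R hR).1 (abs_nonneg _) (by positivity)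
  have h2 := mul_le_mul (b2 R hR) (hdec R hR).2 (abs_nonneg _) (by positivity)
  linarith

lemma int_of_bound (u f : ℝ → ℝ) (hu : Continuous u) (hf : Continuous f) (D e M : ℝ) (he : 0 < e)
    (hD : ∀ R, 0 ≤ R → |u R| ≤ D * Real.exp (-e * R)) (hM : ∀ R, 0 ≤ R → |f R| ≤ M) :
    IntegrableOn (fun R => u R * f R) (Set.Ioi 0) ∧
    |∫ R in Set.Ioi (0:ℝ), u R * f R| ≤ M * (D * ∫ R in Set.Ioi (0:ℝ), Real.exp (-e * R)) := by
  have hi : IntegrableOn (fun R => M * (D * Real.exp (-e * R))) (Set.Ioi 0) :=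
    ((integrableOn_exp_mul_Ioi (by linarith) 0).const_mul D).const_mul M
  have hb : ∀ᵐ R ∂(volume.restrict (Set.Ioi (0:ℝ))),
      ‖u R * f R‖ ≤ M * (D * Real.exp (-e * R)) := by
    refine (ae_restrict_iff' measurableSet_Ioi).2 (Filter.Eventually.of_forall fun R hR => ?_)
    have hR' : (0:ℝ) ≤ R := le_of_lt hR
    rw [norm_mul, Real.norm_eq_abs, Real.norm_eq_abs, mul_comm]
    have := hM R hR'
    exact mul_le_mul this (hD R hR') (abs_nonneg _) ((abs_nonneg _).trans this)
  refine ⟨Integrable.mono' hi (hu.mul hf).aestronglyMeasurable hb, ?_⟩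
  have := norm_integral_le_of_norm_le hi hb
  rwa [integral_const_mul, integral_const_mul, Real.norm_eq_abs] at this

lemma ibp_step (ξd : ℝ) (φd : ℝ → ℝ)
    (hφd0 : φd 0 = 0)
    (hφd_d : ∀ R : ℝ, HasDerivAt φd (deriv φd R) R)
    (hφd_dd : ∀ R : ℝ, HasDerivAt (deriv φd) (deriv (deriv φd) R) R)
    (hφd_eq : ∀ R : ℝ, 0 < R → deriv (deriv φd) R = (- ξd - qf R) * φd R)
    (a C : ℝ) (ha : 0 < a) (hC : 0 < C)
    (hdec : ∀ R : ℝ, 0 ≤ R →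
      |φd R| ≤ C * Real.exp (-(a * R)) ∧ |deriv φd R| ≤ C * Real.exp (-(a * R)))
    {P S : ℝ → ℝ} (hP : Cf false P) (hS : Cf true S) :
    ∃ P1 S1, Cf false P1 ∧ Cf true S1 ∧ ∀ (η : ℝ) (f : ℝ → ℝ) (M : ℝ),
      f 0 = 0 → (∀ R : ℝ, HasDerivAt f (deriv f R) R) →
      (∀ R : ℝ, HasDerivAt (deriv f) (-(qf R + η) * f R) R) →
      (∀ R, 0 ≤ R → |f R| ≤ M) → (∀ R, 0 ≤ R → |deriv f R| ≤ M) →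
      η * ∫ R in Set.Ioi (0:ℝ), (P R * φd R + S R * deriv φd R) * f R =
      ∫ R in Set.Ioi (0:ℝ), (P1 R * φd R + S1 R * deriv φd R) * f R := by
  have hcont : Continuous φd := continuous_iff_continuousAt.2 fun R => (hφd_d R).continuousAt
  have hcont' : Continuous (deriv φd) :=
    continuous_iff_continuousAt.2 fun R => (hφd_dd R).continuousAt
  obtain ⟨P2, S2, cP2, cS2, d2⟩ := pair_deriv ξd φd hφd_d hφd_dd hφd_eq hP (by simpa using hS)
  obtain ⟨P3, S3, cP3, cS3, d3⟩ := pair_deriv ξd φd hφd_d hφd_dd hφd_eq cP2 (by simpa using cS2)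
  set P1 : ℝ → ℝ := fun R => (-1) * P3 R + (-1) * (qf R * P R) with hP1
  set S1 : ℝ → ℝ := fun R => (-1) * S3 R + (-1) * (qf R * S R) with hS1
  have cP1 : Cf false P1 := ((Cf.const (-1)).mul' cP3 (by simp)).add
    ((Cf.const (-1)).mul' (Cf.qf.mul' hP (d := false) (by simp)) (by simp))
  have cS1 : Cf true S1 := ((Cf.const (-1)).mul' cS3 (by simp)).add
    ((Cf.const (-1)).mul' (Cf.qf.mul' hS (d := true) (by simp)) (by simp))
  refine ⟨P1, S1, cP1, cS1, ?_⟩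
  intro η f M hf0 hfd hfdd hM hM'
  have hfc : Continuous f := continuous_iff_continuousAt.2 fun R => (hfd R).continuousAt
  have hfc' : Continuous (deriv f) := continuous_iff_continuousAt.2 fun R => (hfdd R).continuousAt
  have e2 : (0:ℝ) < a / 2 := by positivity
  obtain ⟨D, pD, bD⟩ := pair_bound φd a C ha hC hdec hP hS
  obtain ⟨D1, pD1, bD1⟩ := pair_bound φd a C ha hC hdec cP1 cS1
  obtain ⟨D2, pD2, bD2⟩ := pair_bound φd a C ha hC hdec cP2 cS2
  have cu : Continuous (fun R => P R * φd R + S R * deriv φd R) :=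
    (hP.continuous.mul hcont).add (hS.continuous.mul hcont')
  have cu1 : Continuous (fun R => P1 R * φd R + S1 R * deriv φd R) :=
    (cP1.continuous.mul hcont).add (cS1.continuous.mul hcont')
  have cu2 : Continuous (fun R => P2 R * φd R + S2 R * deriv φd R) :=
    (cP2.continuous.mul hcont).add (cS2.continuous.mul hcont')
  have i0 := (int_of_bound _ f cu hfc D _ M e2 bD hM).1
  have i1 := (int_of_bound _ f cu1 hfc D1 _ M e2 bD1 hM).1
  have key := integral_Ioi_of_hasDerivAt_of_tendsto (a := 0) (m := 0)
    (f := fun R => (P2 R * φd R + S2 R * deriv φd R) * f R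
      - (P R * φd R + S R * deriv φd R) * deriv f R)
    (f' := fun R => η * ((P R * φd R + S R * deriv φd R) * f R)
      - (P1 R * φd R + S1 R * deriv φd R) * f R)
    ((cu2.mul hfc).sub (cu.mul hfc')).continuousWithinAt ?_ ((i0.const_mul η).sub i1) ?_
  · rw [integral_sub (i0.const_mul η) i1, integral_const_mul] at key
    simp only [hf0, hφd0, hS.zero] at key
    linarith
  · intro R hR
    refine (((d3 R hR).mul (hfd R)).sub ((d2 R hR).mul (hfdd R))).congr_deriv ?_
    simp only [hP1, hS1]
    ring
  · have ht : Filter.Tendsto (fun R => (D2 + D) * M * Real.exp (-(a / 2) * R)) Filter.atTop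
        (nhds 0) := by
      have h1 : Filter.Tendsto (fun R : ℝ => -(a / 2) * R) Filter.atTop Filter.atBot :=
        Filter.tendsto_id.const_mul_atTop_of_neg (by linarith)
      simpa using (Real.tendsto_exp_atBot.comp h1).const_mul ((D2 + D) * M)
    refine squeeze_zero_norm' ?_ ht
    filter_upwards [Filter.eventually_ge_atTop 0] with R hR
    have h1 := mul_le_mul (bD2 R hR) (hM R hR) (abs_nonneg _) (by positivity)
    have h2 := mul_le_mul (bD R hR) (hM' R hR) (abs_nonneg _) (by positivity)
    refine (norm_sub_le _ _).trans ?_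
    rw [Real.norm_eq_abs, Real.norm_eq_abs, abs_mul, abs_mul]
    linarith

lemma ibp_iter (ξd : ℝ) (φd : ℝ → ℝ)
    (hφd0 : φd 0 = 0)
    (hφd_d : ∀ R : ℝ, HasDerivAt φd (deriv φd R) R)
    (hφd_dd : ∀ R : ℝ, HasDerivAt (deriv φd) (deriv (deriv φd) R) R)
    (hφd_eq : ∀ R : ℝ, 0 < R → deriv (deriv φd) R = (- ξd - qf R) * φd R)
    (a C : ℝ) (ha : 0 < a) (hC : 0 < C)
    (hdec : ∀ R : ℝ, 0 ≤ R →
      |φd R| ≤ C * Real.exp (-(a * R)) ∧ |deriv φd R| ≤ C * Real.exp (-(a * R))) (N : ℕ) :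
    ∃ P1 S1, Cf false P1 ∧ Cf true S1 ∧ ∀ (η : ℝ) (f : ℝ → ℝ) (M : ℝ),
      f 0 = 0 → (∀ R : ℝ, HasDerivAt f (deriv f R) R) →
      (∀ R : ℝ, HasDerivAt (deriv f) (-(qf R + η) * f R) R) →
      (∀ R, 0 ≤ R → |f R| ≤ M) → (∀ R, 0 ≤ R → |deriv f R| ≤ M) →
      η ^ N * ∫ R in Set.Ioi (0:ℝ), R * deriv φd R * f R =
      ∫ R in Set.Ioi (0:ℝ), (P1 R * φd R + S1 R * deriv φd R) * f R := by
  induction N with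
  | zero =>
    refine ⟨fun _ => 0, fun R => R, Cf.const 0, Cf.ident, ?_⟩
    intros; simp
  | succ N ih =>
    obtain ⟨P, S, cP, cS, h⟩ := ih
    obtain ⟨P1, S1, cP1, cS1, h1⟩ :=
      ibp_step ξd φd hφd0 hφd_d hφd_dd hφd_eq a C ha hC hdec cP cS
    refine ⟨P1, S1, cP1, cS1, ?_⟩
    intro η f M a1 a2 a3 a4 a5
    rw [← h1 η f M a1 a2 a3 a4 a5, ← h η f M a1 a2 a3 a4 a5]
    ring

/-- Weighted Volterra operator on bounded continuous functions. -/
lemma exists_op (k c : ℝ) (hk : 0 < k) (hc : 0 ≤ c) (W p : ℝ → ℝ) (hW : Continuous W)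
    (hp : Continuous p) (hWpos : ∀ R, 0 < W R) (hp0 : ∀ R, 0 ≤ p R)
    (hint : ∀ r, 0 ≤ r → ∫ s in (0:ℝ)..r, p s * W s ≤ c * W r) :
    ∃ T : (BoundedContinuousFunction ℝ ℝ) →L[ℝ] (BoundedContinuousFunction ℝ ℝ),
      ‖T‖ ≤ c / k ∧ ∀ f R, T f R = (W (max R 0))⁻¹ *
        ∫ s in (0:ℝ)..(max R 0), Real.sin (k * (max R 0 - s)) / k * (p s * W s) * f s := by
  have hbd : ∀ (f : BoundedContinuousFunction ℝ ℝ) (R : ℝ), ‖(W (max R 0))⁻¹ *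
        ∫ s in (0:ℝ)..(max R 0), Real.sin (k * (max R 0 - s)) / k * (p s * W s) * f s‖
        ≤ c / k * ‖f‖ := by
    intro f R
    set r := max R 0 with hr
    have hr0 : 0 ≤ r := le_max_right _ _
    have h1 : ‖∫ s in (0:ℝ)..r, Real.sin (k * (r - s)) / k * (p s * W s) * f s‖ ≤
        ∫ s in (0:ℝ)..r, (1 / k * ‖f‖) * (p s * W s) := by
      refine intervalIntegral.norm_integral_le_of_norm_le hr0 ?_
        (Continuous.intervalIntegrable (by fun_prop) _ _)
      refine Filter.Eventually.of_forall fun s _ => ?_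
      have hpw : 0 ≤ p s * W s := mul_nonneg (hp0 s) (hWpos s).le
      rw [norm_mul, norm_mul, norm_div, Real.norm_of_nonneg hpw, Real.norm_of_nonneg hk.le,
        Real.norm_eq_abs]
      have h2 : |Real.sin (k * (r - s))| / k ≤ 1 / k :=
        div_le_div_of_nonneg_right (Real.abs_sin_le_one _) hk.le
      have h3 := f.norm_coe_le_norm s
      calc _ ≤ 1 / k * (p s * W s) * ‖f‖ := by gcongr
        _ = _ := by ring
    rw [intervalIntegral.integral_const_mul] at h1
    have h2 := hint r hr0
    have hw := hWpos r
    rw [norm_mul, norm_inv, Real.norm_of_nonneg hw.le, inv_mul_le_iff₀ hw]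
    refine h1.trans ?_
    calc _ ≤ 1 / k * ‖f‖ * (c * W r) := by gcongr
      _ = _ := by ring
  have hct : ∀ (f : BoundedContinuousFunction ℝ ℝ), Continuous fun R : ℝ => (W (max R 0))⁻¹ *
        ∫ s in (0:ℝ)..(max R 0), Real.sin (k * (max R 0 - s)) / k * (p s * W s) * f s := by
    intro f
    refine Continuous.mul (Continuous.inv₀ (by fun_prop) fun R => (hWpos _).ne') ?_
    apply intervalIntegral.continuous_parametric_intervalIntegral_of_continuous
    · have := f.continuous
      simp only [Function.uncurry_def]
      fun_prop
    · fun_prop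
  have hii : ∀ (f : BoundedContinuousFunction ℝ ℝ) (r : ℝ), IntervalIntegrable
      (fun s => Real.sin (k * (r - s)) / k * (p s * W s) * f s) volume 0 r := by
    intro f r
    have := f.continuous
    exact Continuous.intervalIntegrable (by fun_prop) _ _
  let T0 : (BoundedContinuousFunction ℝ ℝ) →ₗ[ℝ] (BoundedContinuousFunction ℝ ℝ) :=
    { toFun := fun f => BoundedContinuousFunction.ofNormedAddCommGroup _ (hct f) _ (hbd f)
      map_add' := by
        intro f g
        ext R
        simp only [BoundedContinuousFunction.coe_ofNormedAddCommGroup,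
          BoundedContinuousFunction.coe_add, Pi.add_apply]
        rw [← mul_add, ← intervalIntegral.integral_add (hii f _) (hii g _)]
        congr 2
        funext s
        ring
      map_smul' := by
        intro m f
        ext R
        simp only [BoundedContinuousFunction.coe_ofNormedAddCommGroup,
          BoundedContinuousFunction.coe_smul, smul_eq_mul, RingHom.id_apply]
        rw [mul_left_comm m, ← intervalIntegral.integral_const_mul m]
        congr 2
        funext s
        ring }
  refine ⟨T0.mkContinuous (c / k) ?_, LinearMap.mkContinuous_norm_le _ (by positivity) _, ?_⟩
  · intro f
    refine (BoundedContinuousFunction.norm_le (by positivity)).2 (hbd f)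
  · intro f R
    rfl

lemma exists_functional (u : ℝ → ℝ) (hu : Continuous u) (D e : ℝ) (he : 0 < e)
    (hD : ∀ R, 0 ≤ R → |u R| ≤ D * Real.exp (-e * R)) :
    ∃ L : (BoundedContinuousFunction ℝ ℝ) →L[ℝ] ℝ,
      ∀ f, L f = ∫ R in Set.Ioi (0:ℝ), u R * f R := by
  have h := fun f : BoundedContinuousFunction ℝ ℝ =>
    int_of_bound u f hu f.continuous D e ‖f‖ he hD (fun R _ => f.norm_coe_le_norm R)
  let L0 : (BoundedContinuousFunction ℝ ℝ) →ₗ[ℝ] ℝ :=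
    { toFun := fun f => ∫ R in Set.Ioi (0:ℝ), u R * f R
      map_add' := by
        intro f g
        rw [← integral_add (h f).1 (h g).1]
        congr 1
        funext R
        simp [mul_add]
      map_smul' := by
        intro m f
        rw [RingHom.id_apply, smul_eq_mul, ← integral_const_mul]
        congr 1
        funext R
        simp only [BoundedContinuousFunction.coe_smul, smul_eq_mul]
        ring }
  refine ⟨L0.mkContinuous (D * ∫ R in Set.Ioi (0:ℝ), Real.exp (-e * R)) ?_, fun f => rfl⟩
  intro f
  rw [mul_comm]
  exact (h f).2

lemma duhamel (f : ℝ → ℝ) (η η0 k : ℝ) (hk : 0 < k) (hk2 : k ^ 2 = η0)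
    (h0 : f 0 = 0) (h0' : deriv f 0 = 1)
    (hd : ∀ R : ℝ, HasDerivAt f (deriv f R) R)
    (hdd : ∀ R : ℝ, HasDerivAt (deriv f) (-(qf R + η) * f R) R) (r : ℝ) :
    f r + ∫ s in (0:ℝ)..r, Real.sin (k * (r - s)) / k * ((qf s + (η - η0)) * f s)
      = Real.sin (k * r) / k := by
  have hfc : Continuous f := continuous_iff_continuousAt.2 fun R => (hd R).continuousAt
  have hq := qf_cont
  have hder : ∀ s, HasDerivAt (fun s => Real.sin (k * (r - s)) / k * deriv f s
      + Real.cos (k * (r - s)) * f s)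
      (-(Real.sin (k * (r - s)) / k * ((qf s + (η - η0)) * f s))) s := by
    intro s
    have h1 : HasDerivAt (fun s => k * (r - s)) (-k) s := by
      simpa using! ((hasDerivAt_id s).const_sub r).const_mul k
    refine (((h1.sin.div_const k).mul (hdd s)).add (h1.cos.mul (hd s))).congr_deriv ?_
    rw [← hk2]
    field_simp
    ring
  have := intervalIntegral.integral_eq_sub_of_hasDerivAt (a := 0) (b := r) (fun s _ => hder s)
    (Continuous.intervalIntegrable (by fun_prop) _ _)
  rw [intervalIntegral.integral_neg] at this
  simp only [sub_self, mul_zero, Real.sin_zero, zero_div, zero_mul, Real.cos_zero, one_mul, h0,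
    h0', sub_zero, mul_one, zero_add, add_zero] at this
  linarith

lemma abstract_smooth {E : Type*} [NormedAddCommGroup E] [NormedSpace ℝ E] [CompleteSpace E]
    (A T : E →L[ℝ] E) (hAn : ‖A‖ < 1) (Φ : ℝ → E) (x0 : E) (η0 : ℝ) (hη0 : 0 < η0)
    (L : E →L[ℝ] ℝ) (K : ℝ → ℝ)
    (h : ∀ η, 0 < η → Φ η + A (Φ η) + (η - η0) • T (Φ η) = x0)
    (hK : ∀ η, 0 < η → K η = L (Φ η)) : ContDiffAt ℝ (⊤ : ℕ∞) K η0 := by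
  have hAn' : ‖-A‖ < 1 := by rwa [norm_neg]
  set S : ℝ → (E →L[ℝ] E) := fun η => 1 + A + (η - η0) • T with hS
  have hunit0 : IsUnit (S η0) := by
    have : S η0 = 1 - (-A) := by simp [hS]
    rw [this]
    exact isUnit_one_sub_of_norm_lt_one hAn'
  have hScd : ContDiff ℝ (⊤ : ℕ∞) S := by
    simp only [hS]
    exact contDiff_const.add ((contDiff_id.sub contDiff_const).smul contDiff_const)
  have hunit : ∀ᶠ η in nhds η0, IsUnit (S η) :=
    hScd.continuous.continuousAt.eventually (Units.isOpen.mem_nhds hunit0)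
  have hmain : K =ᶠ[nhds η0] fun η => L (Ring.inverse (S η) x0) := by
    filter_upwards [hunit, lt_mem_nhds hη0] with η hη hpos
    have h1 : x0 = S η (Φ η) := by
      rw [← h η hpos]; simp [hS]
    have h2 : Ring.inverse (S η) (S η (Φ η)) = Φ η := by
      have := Ring.inverse_mul_cancel _ hη
      calc _ = (Ring.inverse (S η) * S η) (Φ η) := rfl
        _ = _ := by rw [this]; rfl
    rw [h1, h2, hK η hpos]
  refine ContDiffAt.congr_of_eventuallyEq ?_ hmain
  obtain ⟨U, hU⟩ := hunit0
  have hinv : ContDiffAt ℝ (⊤ : ℕ∞) (fun η => Ring.inverse (S η)) η0 := by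
    have h1 := contDiffAt_ringInverse ℝ (n := (⊤ : ℕ∞)) U
    rw [hU] at h1
    exact h1.comp η0 hScd.contDiffAt
  exact L.contDiff.contDiffAt.comp η0 (hinv.clm_apply contDiffAt_const)

lemma smooth_at (u : ℝ → ℝ) (hu : Continuous u) (D e : ℝ) (he : 0 < e)
    (hD : ∀ R, 0 ≤ R → |u R| ≤ D * Real.exp (-e * R)) (hDp : 0 < D) (φ : ℝ → ℝ → ℝ)
    (B : ℝ → ℝ)
    (h0 : ∀ η, φ η 0 = 0) (h0' : ∀ η, deriv (φ η) 0 = 1)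
    (hd : ∀ η R : ℝ, HasDerivAt (φ η) (deriv (φ η) R) R)
    (hdd : ∀ η R : ℝ, HasDerivAt (deriv (φ η)) (-(qf R + η) * φ η R) R)
    (hB : ∀ η, 0 < η → ∀ R, 0 ≤ R → |φ η R| ≤ B η) (η0 : ℝ) (hη0 : 0 < η0) :
    ContDiffAt ℝ (⊤ : ℕ∞) (fun η => ∫ R in Set.Ioi (0 : ℝ), u R * φ η R) η0 := by
  have hfc : ∀ η, Continuous (φ η) :=
    fun η => continuous_iff_continuousAt.2 fun R => (hd η R).continuousAt
  have hqc := qf_cont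
  set k := Real.sqrt η0
  have hk : 0 < k := Real.sqrt_pos.2 hη0
  have hk2 : k ^ 2 = η0 := Real.sq_sqrt hη0.le
  set m : ℝ := 2 / k with hm
  have hmpos : 0 < m := by positivity
  set W : ℝ → ℝ := fun R => Real.exp (e / 2 * R + m * 15 * Real.arctan R) with hWdef
  have hWc : Continuous W := by
    have := Real.continuous_arctan
    simp only [hWdef]; fun_prop
  have hWpos : ∀ R, 0 < W R := fun R => Real.exp_pos _
  have hW1 : ∀ R, 0 ≤ R → 1 ≤ W R := by
    intro R hR
    have := Real.arctan_nonneg.2 hR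
    exact Real.one_le_exp (by positivity)
  have hWd : ∀ R, HasDerivAt W (W R * (e / 2 + m * 15 * (1 / (1 + R ^ 2)))) R := by
    intro R
    have h1 : HasDerivAt (fun R => e / 2 * R + m * 15 * Real.arctan R)
        (e / 2 + m * 15 * (1 / (1 + R ^ 2))) R := by
      simpa using! ((hasDerivAt_id R).const_mul (e / 2)).add
        ((Real.hasDerivAt_arctan R).const_mul (m * 15))
    exact h1.exp
  have hWi : ∀ (p : ℝ → ℝ) (c : ℝ), Continuous p → 0 ≤ c →
      (∀ s, p s ≤ c * (e / 2 + m * 15 * (1 / (1 + s ^ 2)))) →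
      ∀ r, 0 ≤ r → ∫ s in (0:ℝ)..r, p s * W s ≤ c * W r := by
    intro p c hp hc h r hr
    have hci : Continuous (fun s => c * (W s * (e / 2 + m * 15 * (1 / (1 + s ^ 2))))) := by
      have : Continuous (fun s : ℝ => 1 / (1 + s ^ 2)) :=
        continuous_const.div (by fun_prop) (fun x => by positivity)
      fun_prop
    have h1 := intervalIntegral.integral_eq_sub_of_hasDerivAt (a := 0) (b := r)
      (fun s _ => (hWd s).const_mul c) (hci.intervalIntegrable _ _)
    have h2 : ∫ s in (0:ℝ)..r, p s * W s ≤
        ∫ s in (0:ℝ)..r, c * (W s * (e / 2 + m * 15 * (1 / (1 + s ^ 2)))) := by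
      refine intervalIntegral.integral_mono_on hr
        (Continuous.intervalIntegrable (by fun_prop) _ _) (hci.intervalIntegrable _ _) ?_
      intro s _
      have := mul_le_mul_of_nonneg_right (h s) (hWpos s).le
      linarith
    have h3 : 0 ≤ c * W 0 := mul_nonneg hc (hWpos 0).le
    linarith
  obtain ⟨A, hAn, hA⟩ := exists_op k (1 / m) hk (by positivity) W qf hWc qf_cont hWpos
    (fun R => (qf_pos R).le) (hWi qf (1 / m) qf_cont (by positivity) (by
      intro s
      have h1 := qf_le s
      have h2 : 1 / m * (e / 2 + m * 15 * (1 / (1 + s ^ 2))) =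
        1 / m * (e / 2) + 15 * (1 / (1 + s ^ 2)) := by field_simp
      rw [h2]
      have : 0 ≤ 1 / m * (e / 2) := by positivity
      linarith))
  obtain ⟨T, -, hT⟩ := exists_op k (2 / e) hk (by positivity) W (fun _ => 1) hWc continuous_const
    hWpos (fun R => zero_le_one) (hWi (fun _ => 1) (2 / e) continuous_const (by positivity) (by
      intro s
      have h2 : 2 / e * (e / 2 + m * 15 * (1 / (1 + s ^ 2))) =
        1 + 2 / e * (m * 15 * (1 / (1 + s ^ 2))) := by field_simp
      rw [h2]
      have : 0 ≤ 2 / e * (m * 15 * (1 / (1 + s ^ 2))) := by positivity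
      linarith))
  have hAn' : ‖A‖ < 1 := by
    refine hAn.trans_lt ?_
    rw [hm]
    field_simp
    norm_num
  -- the weighted eigenfunctions
  have hΦ : ∀ η, ∃ g : BoundedContinuousFunction ℝ ℝ, 0 < η → ∀ R,
      g R = (W (max R 0))⁻¹ * φ η (max R 0) := by
    intro η
    by_cases hη : 0 < η
    · refine ⟨BoundedContinuousFunction.ofNormedAddCommGroup
        (fun R => (W (max R 0))⁻¹ * φ η (max R 0)) ?_ (B η) ?_, fun _ R => rfl⟩
      · refine Continuous.mul (Continuous.inv₀ (by fun_prop) fun R => (hWpos _).ne') ?_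
        exact (hfc η).comp (by fun_prop)
      · intro R
        have hr : 0 ≤ max R 0 := le_max_right _ _
        rw [norm_mul, norm_inv, Real.norm_of_nonneg (hWpos _).le, inv_mul_le_iff₀ (hWpos _)]
        have h1 := hB η hη _ hr
        have h2 := hW1 _ hr
        rw [Real.norm_eq_abs]
        nlinarith [abs_nonneg (φ η (max R 0))]
    · exact ⟨0, fun h => absurd h hη⟩
  choose Φ hΦ using hΦ
  have hSΦ : ∀ η, 0 < η → ∀ R, Φ η R + A (Φ η) R + (η - η0) * T (Φ η) R =
      (W (max R 0))⁻¹ * (Real.sin (k * (max R 0)) / k) := by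
    intro η hη R
    have hr : 0 ≤ max R 0 := le_max_right _ _
    rw [← duhamel (φ η) η η0 k hk hk2 (h0 η) (h0' η) (hd η) (hdd η) (max R 0)]
    rw [hA, hT, hΦ η hη]
    have hφc := hfc η
    have hΦc := (Φ η).continuous
    rw [mul_left_comm (η - η0), ← intervalIntegral.integral_const_mul (η - η0), add_assoc, ← mul_add,
      ← intervalIntegral.integral_add (Continuous.intervalIntegrable (by fun_prop) _ _)
        (Continuous.intervalIntegrable (by fun_prop) _ _), ← mul_add]
    congr 2
    refine intervalIntegral.integral_congr ?_
    intro s hs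
    rw [Set.uIcc_of_le hr] at hs
    have hs0 : max s 0 = s := max_eq_left hs.1
    simp only [hΦ η hη, hs0]
    have := (hWpos s).ne'
    field_simp
  obtain ⟨L, hL⟩ := exists_functional (fun R => u R * W R) (hu.mul hWc)
    (D * Real.exp (m * 15 * (Real.pi / 2))) (e / 2) (by positivity) (by
      intro R hR
      rw [abs_mul, abs_of_pos (hWpos R)]
      have h1 := hD R hR
      have h2 : W R ≤ Real.exp (m * 15 * (Real.pi / 2)) * Real.exp (e / 2 * R) := by
        rw [← Real.exp_add]
        apply Real.exp_le_exp.2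
        have := mul_le_mul_of_nonneg_left (Real.arctan_lt_pi_div_two R).le
          (show 0 ≤ m * 15 by positivity)
        linarith
      have h3 : Real.exp (-(e / 2) * R) = Real.exp (-e * R) * Real.exp (e / 2 * R) := by
        rw [← Real.exp_add]; congr 1; ring
      rw [h3]
      refine (mul_le_mul h1 h2 (hWpos R).le (by positivity)).trans (le_of_eq ?_)
      ring)
  refine abstract_smooth A T hAn' Φ (Φ η0 + A (Φ η0) + (η0 - η0) • T (Φ η0)) η0 hη0 L _ ?_ ?_
  · intro η hη
    ext R
    have h1 := hSΦ η hη R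
    have h2 := hSΦ η0 hη0 R
    simp only [BoundedContinuousFunction.coe_add, BoundedContinuousFunction.coe_smul,
      Pi.add_apply, smul_eq_mul]
    rw [h1, h2]
  · intro η hpos
    rw [hL]
    refine setIntegral_congr_fun measurableSet_Ioi ?_
    intro R hR
    have hR0 : max R 0 = R := max_eq_left (le_of_lt hR)
    simp only [hΦ η hpos, hR0]
    have := (hWpos R).ne'
    field_simp

/-- The function `K_d(η) = ⟨R∂_Rφ_d, φ(·,η)⟩ = ∫₀^∞ R φ_d'(R) φ(R,η) dR` is well defined,
smooth on `(0,∞)`, and rapidly decaying at infinity. -/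
theorem Kd_smooth_rapidly_decaying
    (ξd : ℝ) (φd : ℝ → ℝ) (φ : ℝ → ℝ → ℝ)
    -- ξd is a negative eigenvalue with L²-normalized positive Dirichlet eigenfunction φd
    (hξd : ξd < 0)
    (hφd0 : φd 0 = 0)
    (hφd_pos : ∀ R : ℝ, 0 < R → 0 < φd R)
    (hφd_d : ∀ R : ℝ, HasDerivAt φd (deriv φd R) R)
    (hφd_dd : ∀ R : ℝ, HasDerivAt (deriv φd) (deriv (deriv φd) R) R)
    (hφd_eq : ∀ R ∈ Set.Ioi (0 : ℝ),
      - deriv (deriv φd) R - (5 / (1 + R ^ 2 / 3) ^ 2) * φd R = ξd * φd R)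
    (hφd_L2 : IntegrableOn (fun R => (φd R) ^ 2) (Set.Ioi 0))
    (hφd_norm : ∫ R in Set.Ioi (0 : ℝ), (φd R) ^ 2 = 1)
    -- φ(·,η) is the regular solution with φ(0,η) = 0, ∂_Rφ(0,η) = 1
    (hφ : ∀ η : ℝ,
      φ η 0 = 0 ∧ deriv (φ η) 0 = 1 ∧
      (∀ R : ℝ, HasDerivAt (φ η) (deriv (φ η) R) R) ∧
      (∀ R : ℝ, HasDerivAt (deriv (φ η)) (deriv (deriv (φ η)) R) R) ∧
      (∀ R : ℝ, - deriv (deriv (φ η)) R - (5 / (1 + R ^ 2 / 3) ^ 2) * φ η R = η * φ η R)) :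
    -- the integral defining K_d converges
    (∀ η : ℝ, 0 < η →
      IntegrableOn (fun R => R * deriv φd R * φ η R) (Set.Ioi 0)) ∧
    -- K_d is smooth on (0,∞)
    ContDiffOn ℝ (⊤ : ℕ∞) (fun η => ∫ R in Set.Ioi (0 : ℝ), R * deriv φd R * φ η R)
      (Set.Ioi 0) ∧
    -- K_d decays rapidly at infinity
    (∀ N : ℕ, ∃ C : ℝ, 0 < C ∧ ∀ η : ℝ, 1 ≤ η →
      |∫ R in Set.Ioi (0 : ℝ), R * deriv φd R * φ η R| ≤ C / η ^ N) := by
  have hdeq : ∀ R : ℝ, 0 < R → deriv (deriv φd) R = (- ξd - qf R) * φd R := by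
    intro R hR
    have := hφd_eq R hR
    unfold qf
    linarith
  have hcont' : Continuous (deriv φd) :=
    continuous_iff_continuousAt.2 fun R => (hφd_dd R).continuousAt
  have hφdd : ∀ η R : ℝ, HasDerivAt (deriv (φ η)) (-(qf R + η) * φ η R) R := by
    intro η R
    refine ((hφ η).2.2.2.1 R).congr_deriv ?_
    have := (hφ η).2.2.2.2 R
    unfold qf
    linarith
  have hφc : ∀ η, Continuous (φ η) :=
    fun η => continuous_iff_continuousAt.2 fun R => ((hφ η).2.2.1 R).continuousAt
  obtain ⟨a, ha, C, hC, hdec⟩ := phid_decay ξd φd hξd hφd_pos hφd_d hφd_dd hdeq hφd_L2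
  have hen := fun η hη => phi_bound (φ η) η hη (hφ η).1 (hφ η).2.1 (hφ η).2.2.1 (hφdd η)
  have hB : ∀ η, 0 < η → ∀ R, 0 ≤ R →
      |φ η R| ≤ Real.sqrt (Real.exp (15 / Real.sqrt η * (Real.pi / 2)) / η) := by
    intro η hη R hR
    apply Real.abs_le_sqrt
    rw [le_div_iff₀ hη]
    have := hen η hη R hR
    nlinarith [sq_nonneg (deriv (φ η) R)]
  obtain ⟨D, hD, hDb⟩ := pair_bound φd a C ha hC hdec (Cf.const 0) Cf.ident
  simp only [zero_mul, zero_add] at hDb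
  have hucont : Continuous (fun R : ℝ => R * deriv φd R) := by fun_prop
  have ha2 : (0:ℝ) < a / 2 := by positivity
  refine ⟨fun η hη => (int_of_bound _ (φ η) hucont (hφc η) D _ _ ha2 hDb (hB η hη)).1, ?_, ?_⟩
  · intro η hη
    exact (smooth_at _ hucont D _ ha2 hDb hD φ _ (fun η => (hφ η).1) (fun η => (hφ η).2.1)
      (fun η => (hφ η).2.2.1) hφdd hB η hη).contDiffWithinAt
  · intro N
    obtain ⟨P, S, cP, cS, h⟩ := ibp_iter ξd φd hφd0 hφd_d hφd_dd hdeq a C ha hC hdec N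
    obtain ⟨D', hD', hDb'⟩ := pair_bound φd a C ha hC hdec cP cS
    have hcont : Continuous φd := continuous_iff_continuousAt.2 fun R => (hφd_d R).continuousAt
    have cu : Continuous (fun R => P R * φd R + S R * deriv φd R) :=
      (cP.continuous.mul hcont).add (cS.continuous.mul hcont')
    set M : ℝ := Real.sqrt (Real.exp (15 * (Real.pi / 2))) with hM
    have hen1 : ∀ η, 1 ≤ η → ∀ R, 0 ≤ R → |φ η R| ≤ M ∧ |deriv (φ η) R| ≤ M := by
      intro η hη R hR
      have h1 := hen η (by linarith) R hR
      have h2 : Real.exp (15 / Real.sqrt η * (Real.pi / 2)) ≤ Real.exp (15 * (Real.pi / 2)) := by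
        apply Real.exp_le_exp.2
        apply mul_le_mul_of_nonneg_right _ (by positivity)
        exact div_le_self (by norm_num) (Real.one_le_sqrt.2 hη)
      have h3 := sq_nonneg (deriv (φ η) R)
      have h4 := sq_nonneg (φ η R)
      exact ⟨Real.abs_le_sqrt (by nlinarith), Real.abs_le_sqrt (by nlinarith)⟩
    refine ⟨M * (D' * ∫ R in Set.Ioi (0:ℝ), Real.exp (-(a / 2) * R)) + 1, ?_, ?_⟩
    · have : 0 ≤ ∫ R in Set.Ioi (0:ℝ), Real.exp (-(a / 2) * R) :=
        integral_nonneg fun R => (Real.exp_pos _).le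
      positivity
    · intro η hη
      have hpow : 0 < η ^ N := by positivity
      have h1 := h η (φ η) M (hφ η).1 (hφ η).2.2.1 (hφdd η) (fun R hR => (hen1 η hη R hR).1)
        (fun R hR => (hen1 η hη R hR).2)
      have h2 := (int_of_bound _ (φ η) cu (hφc η) D' _ M ha2 hDb'
        (fun R hR => (hen1 η hη R hR).1)).2
      rw [← h1, abs_mul, abs_of_pos hpow] at h2
      rw [le_div_iff₀ hpow]
      linarith

end DiscreteKernel
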